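/- Fix an integer j ≥ 0 and let ν₀,…,ν_j ∈ ℂ be unit vectors such that the squares ν₀²,…,ν_j² are pairwise distinct. Then there exist complex constants a(n,k) for 0 ≤ n,k ≤ j, satisfying |a(n,k)| ≤ (j!)² · (min_{α≠β} |ν_α² − ν_β²|)^{−j(j+1)/2}, such that for every z ∈ ℂ and every function f : ℂ → ℂ that is j-times continuously differentiable in a neighborhood of z, ∂^j f/(∂z^k ∂z̄^{j−k})(z) = Σ_{n=0}^{j} a(n,k) ∇_{ν_n}^j f(z) for each 0 ≤ k ≤ j. -/

import Mathlib

open Complex Finset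

/-- Directional derivative of `f : ℂ → ℂ` at `z` in the direction `ν`:
`∇_ν f(z) = (d/dt) f(z + tν) |_{t=0}`. -/
noncomputable def dirD (ν : ℂ) (f : ℂ → ℂ) (z : ℂ) : ℂ :=
  deriv (fun t : ℝ => f (z + (t : ℂ) * ν)) 0

/-- Iterated directional derivative `∇_ν^j f`. -/
noncomputable def dirDIter (ν : ℂ) (j : ℕ) (f : ℂ → ℂ) : ℂ → ℂ :=
  (dirD ν)^[j] f

/-- Wirtinger derivative `∂f/∂z = ½(∂f/∂x − i ∂f/∂y)`. -/
noncomputable def wD (f : ℂ → ℂ) (z : ℂ) : ℂ :=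
  (1 / 2 : ℂ) * (dirD 1 f z - Complex.I * dirD Complex.I f z)

/-- Wirtinger derivative `∂f/∂z̄ = ½(∂f/∂x + i ∂f/∂y)`. -/
noncomputable def wDbar (f : ℂ → ℂ) (z : ℂ) : ℂ :=
  (1 / 2 : ℂ) * (dirD 1 f z + Complex.I * dirD Complex.I f z)

/-- Mixed Wirtinger derivative `∂^{k+l} f / (∂z^k ∂z̄^l)`. -/
noncomputable def wMixed (k l : ℕ) (f : ℂ → ℂ) : ℂ → ℂ :=
  wD^[k] (wDbar^[l] f)

open Polynomial Filter Topology

section DirectionalDerivatives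

variable {f g : ℂ → ℂ} {z : ℂ}

lemma dirD_eq_fderiv (hf : DifferentiableAt ℝ f z) (ν : ℂ) : dirD ν f z = fderiv ℝ f z ν := by
  have h : HasDerivAt (fun t : ℝ => z + (t : ℂ) * ν) ν 0 := by
    simpa using ((Complex.ofRealCLM.hasDerivAt (x := 0)).mul_const ν).const_add z
  have hf' : HasFDerivAt f (fderiv ℝ f z) (z + ((0 : ℝ) : ℂ) * ν) := by
    simpa using hf.hasFDerivAt
  exact (hf'.comp_hasDerivAt (0 : ℝ) h).deriv

lemma ContDiffAt.eventually_differentiableAt {n : ℕ} (hf : ContDiffAt ℝ (n + 1 : ℕ) f z) :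
    ∀ᶠ w in 𝓝 z, DifferentiableAt ℝ f w := by
  filter_upwards [hf.eventually (by simp)] with w hw
  exact hw.differentiableAt (by simp)

lemma dirD_eventuallyEq_fderiv {n : ℕ} (hf : ContDiffAt ℝ (n + 1 : ℕ) f z) (ν : ℂ) :
    dirD ν f =ᶠ[𝓝 z] fun w => fderiv ℝ f w ν :=
  hf.eventually_differentiableAt.mono fun _ hw => dirD_eq_fderiv hw ν

lemma ContDiffAt.dirD {n : ℕ} (hf : ContDiffAt ℝ (n + 1 : ℕ) f z) (ν : ℂ) :
    ContDiffAt ℝ n (dirD ν f) z :=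
  ((hf.fderiv_right (m := n) (by norm_cast)).clm_apply contDiffAt_const).congr_of_eventuallyEq
    (dirD_eventuallyEq_fderiv hf ν)

lemma ContDiffAt.wD {n : ℕ} (hf : ContDiffAt ℝ (n + 1 : ℕ) f z) : ContDiffAt ℝ n (wD f) z :=
  contDiffAt_const.mul ((hf.dirD 1).sub (contDiffAt_const.mul (hf.dirD I)))

lemma ContDiffAt.wDbar {n : ℕ} (hf : ContDiffAt ℝ (n + 1 : ℕ) f z) :
    ContDiffAt ℝ n (wDbar f) z :=
  contDiffAt_const.mul ((hf.dirD 1).add (contDiffAt_const.mul (hf.dirD I)))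

lemma ContDiffAt.iterate_wD {n k : ℕ} (hf : ContDiffAt ℝ (n + k : ℕ) f z) :
    ContDiffAt ℝ n (_root_.wD^[k] f) z := by
  induction k generalizing n with
  | zero => exact hf
  | succ k ih =>
    rw [Function.iterate_succ_apply']
    exact (ih (by rwa [add_right_comm])).wD

lemma ContDiffAt.iterate_wDbar {n k : ℕ} (hf : ContDiffAt ℝ (n + k : ℕ) f z) :
    ContDiffAt ℝ n (_root_.wDbar^[k] f) z := by
  induction k generalizing n with
  | zero => exact hf
  | succ k ih =>
    rw [Function.iterate_succ_apply']
    exact (ih (by rwa [add_right_comm])).wDbar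

lemma Filter.EventuallyEq.dirD_eq (h : f =ᶠ[𝓝 z] g) (ν : ℂ) : dirD ν f z = dirD ν g z := by
  refine EventuallyEq.deriv_eq ?_
  have hc : Tendsto (fun t : ℝ => z + (t : ℂ) * ν) (𝓝 0) (𝓝 z) := by
    have : Continuous fun t : ℝ => z + (t : ℂ) * ν := by fun_prop
    simpa using this.tendsto 0
  exact hc.eventually h

lemma Filter.EventuallyEq.wD_eq (h : f =ᶠ[𝓝 z] g) : wD f z = wD g z := by
  simp only [wD, h.dirD_eq]

lemma dirD_comm (hf : ContDiffAt ℝ 2 f z) (μ ν : ℂ) :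
    dirD μ (dirD ν f) z = dirD ν (dirD μ f) z := by
  have hf' : ContDiffAt ℝ (1 + 1 : ℕ) f z := hf
  have hd : DifferentiableAt ℝ (fderiv ℝ f) z :=
    (hf'.fderiv_right (m := 1) (by norm_cast)).differentiableAt (by simp)
  have key (a b : ℂ) : dirD a (dirD b f) z = fderiv ℝ (fderiv ℝ f) z a b := by
    rw [(dirD_eventuallyEq_fderiv hf' b).dirD_eq, dirD_eq_fderiv (by fun_prop),
      fderiv_clm_apply hd (by fun_prop)]
    simp
  rw [key, key]
  exact (hf.isSymmSndFDerivAt (by simp)) μ ν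

/-- A directional derivative of a linear combination of two functions. -/
lemma dirD_linear_combination (hf : DifferentiableAt ℝ f z) (hg : DifferentiableAt ℝ g z)
    (a b ν : ℂ) :
    dirD ν (fun w => a * f w + b * g w) z = a * dirD ν f z + b * dirD ν g z := by
  rw [dirD_eq_fderiv (by fun_prop), dirD_eq_fderiv hf, dirD_eq_fderiv hg,
    fderiv_fun_add (by fun_prop) (by fun_prop), fderiv_const_mul hf, fderiv_const_mul hg]
  simp

lemma wD_eq_linear_combination (f : ℂ → ℂ) :
    wD f = fun w => (1 / 2) * dirD 1 f w + (-I / 2) * dirD I f w := by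
  ext w; simp only [wD]; ring

lemma wDbar_eq_linear_combination (f : ℂ → ℂ) :
    wDbar f = fun w => (1 / 2) * dirD 1 f w + (I / 2) * dirD I f w := by
  ext w; simp only [wDbar]; ring

lemma wDbar_wD_comm (hf : ContDiffAt ℝ 2 f z) : wDbar (wD f) z = wD (wDbar f) z := by
  have hf' : ContDiffAt ℝ (1 + 1 : ℕ) f z := hf
  have hd (ν : ℂ) : DifferentiableAt ℝ (dirD ν f) z := (hf'.dirD ν).differentiableAt (by simp)
  simp only [wDbar_eq_linear_combination, wD_eq_linear_combination,
    dirD_linear_combination (hd 1) (hd I), dirD_comm hf I 1]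
  ring

lemma wDbar_iterate_wD {k : ℕ} (hf : ContDiffAt ℝ (k + 1 : ℕ) f z) :
    wDbar (wD^[k] f) z = wD^[k] (wDbar f) z := by
  induction k generalizing z with
  | zero => rfl
  | succ k ih =>
    have hf₂ : ContDiffAt ℝ (2 + k : ℕ) f z := by convert hf using 2; ring
    rw [Function.iterate_succ_apply', Function.iterate_succ_apply', wDbar_wD_comm hf₂.iterate_wD]
    refine Filter.EventuallyEq.wD_eq ?_
    filter_upwards [hf.eventually (by simp)] with w hw
    exact ih (hw.of_le (by norm_cast; omega))

/-- `∇_ν = ν ∂/∂z + ν̄ ∂/∂z̄` -/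
lemma dirD_eq_wD_add_wDbar (hf : DifferentiableAt ℝ f z) (ν : ℂ) :
    dirD ν f z = ν * wD f z + (starRingEnd ℂ) ν * wDbar f z := by
  have hν : fderiv ℝ f z ν = ν.re * fderiv ℝ f z 1 + ν.im * fderiv ℝ f z I := by
    conv_lhs => rw [show ν = ν.re • (1 : ℂ) + ν.im • I by simp [Complex.re_add_im]]
    rw [map_add, map_smul, map_smul]
    simp
  have h₁ : (ν.re : ℂ) = (ν + (starRingEnd ℂ) ν) / 2 := Complex.re_eq_add_conj ν
  have h₂ : (ν.im : ℂ) = (ν - (starRingEnd ℂ) ν) / (2 * I) := Complex.im_eq_sub_conj ν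
  simp only [wD, wDbar, dirD_eq_fderiv hf, hν, h₁, h₂]
  field_simp
  ring_nf
  simp only [I_sq]
  ring

lemma dirD_sum {ι : Type*} (s : Finset ι) {F : ι → ℂ → ℂ} (c : ι → ℂ)
    (hF : ∀ i ∈ s, DifferentiableAt ℝ (F i) z) (ν : ℂ) :
    dirD ν (fun w => ∑ i ∈ s, c i * F i w) z = ∑ i ∈ s, c i * dirD ν (F i) z := by
  have hc : ∀ i ∈ s, DifferentiableAt ℝ (fun w => c i * F i w) z :=
    fun i hi => (hF i hi).const_mul _
  rw [dirD_eq_fderiv (DifferentiableAt.fun_sum hc), fderiv_fun_sum hc,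
    _root_.sum_apply]
  refine Finset.sum_congr rfl fun i hi => ?_
  rw [fderiv_const_mul (hF i hi), dirD_eq_fderiv (hF i hi)]
  simp

lemma ContDiffAt.wMixed {n k l : ℕ} (hf : ContDiffAt ℝ (n + k + l : ℕ) f z) :
    ContDiffAt ℝ n (wMixed k l f) z :=
  hf.iterate_wDbar.iterate_wD

lemma wD_wMixed (k l : ℕ) (f : ℂ → ℂ) (z : ℂ) : wD (wMixed k l f) z = wMixed (k + 1) l f z := by
  simp only [wMixed, Function.iterate_succ_apply']

lemma wDbar_wMixed {k l : ℕ} (hf : ContDiffAt ℝ (k + l + 1 : ℕ) f z) :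
    wDbar (wMixed k l f) z = wMixed k (l + 1) f z := by
  have h : ContDiffAt ℝ (k + 1 : ℕ) (wDbar^[l] f) z :=
    ContDiffAt.iterate_wDbar (by rwa [add_right_comm])
  simp only [wMixed, Function.iterate_succ_apply', wDbar_iterate_wD h]

/-- Binomial expansion of an iterated directional derivative into mixed Wirtinger derivatives. -/
theorem dirDIter_eq_sum_wMixed {n : ℕ} (hf : ContDiffAt ℝ n f z) (ν : ℂ) :
    dirDIter ν n f z = ∑ p ∈ antidiagonal n, (n.choose p.1 : ℂ) *
      (ν ^ p.1 * (starRingEnd ℂ) ν ^ p.2 * wMixed p.1 p.2 f z) := by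
  induction n generalizing z with
  | zero => simp [dirDIter, wMixed]
  | succ n ih =>
    have hev : dirDIter ν n f =ᶠ[𝓝 z] fun w => ∑ p ∈ antidiagonal n,
        ((n.choose p.1 : ℂ) * (ν ^ p.1 * (starRingEnd ℂ) ν ^ p.2)) * wMixed p.1 p.2 f w := by
      filter_upwards [hf.eventually (by simp)] with w hw
      rw [ih (hw.of_le (by norm_cast; omega))]
      exact Finset.sum_congr rfl fun p _ => by ring
    have hd : ∀ p ∈ antidiagonal n, DifferentiableAt ℝ (wMixed p.1 p.2 f) z := fun p hp => by
      have hp' := mem_antidiagonal.1 hp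
      have h : ContDiffAt ℝ (1 + p.1 + p.2 : ℕ) f z := by
        rwa [add_assoc, hp', add_comm 1 n]
      exact h.wMixed.differentiableAt (by simp)
    rw [Finset.sum_antidiagonal_choose_succ_mul
      (fun k l => ν ^ k * (starRingEnd ℂ) ν ^ l * wMixed k l f z), ← Finset.sum_add_distrib]
    calc dirDIter ν (n + 1) f z = dirD ν (dirDIter ν n f) z := by
          simp only [dirDIter, Function.iterate_succ_apply']
      _ = _ := by
          rw [hev.dirD_eq, dirD_sum _ _ hd]
          refine Finset.sum_congr rfl fun p hp => ?_
          have hp' := mem_antidiagonal.1 hp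
          rw [dirD_eq_wD_add_wDbar (hd p hp), wD_wMixed, wDbar_wMixed (by rwa [hp']),
            ← Nat.choose_symm_of_eq_add (show n = p.2 + p.1 by omega)]
          ring

end DirectionalDerivatives

section Vandermonde

variable {ι : Type*}

lemma norm_coeff_prod_X_sub_C_le (s : Finset ι) {w : ι → ℂ} (hw : ∀ i, ‖w i‖ = 1) (k : ℕ) :
    ‖(∏ i ∈ s, (X - C (w i))).coeff k‖ ≤ (s.card).choose k := by
  classical
  induction s using Finset.induction_on generalizing k with
  | empty => cases k <;> simp [coeff_one]
  | insert i s hi ih =>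
    rw [Finset.prod_insert hi, Finset.card_insert_of_notMem hi, sub_mul, coeff_sub, coeff_C_mul]
    cases k with
    | zero => simpa [hw] using ih 0
    | succ k =>
      rw [coeff_X_mul, Nat.choose_succ_succ, Nat.cast_add]
      refine (norm_sub_le _ _).trans (add_le_add (ih k) ?_)
      rw [norm_mul, hw, one_mul]
      exact ih (k + 1)

lemma norm_coeff_lagrange_basis_le [DecidableEq ι] (s : Finset ι) {w : ι → ℂ}
    (hw : ∀ i, ‖w i‖ = 1) {δ : ℝ} (hδ : 0 < δ)
    (hsep : ∀ i j, i ≠ j → δ ≤ ‖w i - w j‖) {i : ι} (hi : i ∈ s) (k : ℕ) :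
    ‖(Lagrange.basis s w i).coeff k‖ ≤ (s.card - 1).choose k * (δ ^ (s.card - 1))⁻¹ := by
  have h : Lagrange.basis s w i =
      C (∏ m ∈ s.erase i, (w i - w m)⁻¹) * ∏ m ∈ s.erase i, (X - C (w m)) := by
    simp only [Lagrange.basis, Lagrange.basisDivisor, Finset.prod_mul_distrib, map_prod]
  rw [h, coeff_C_mul, norm_mul, mul_comm]
  have hc := Finset.card_erase_of_mem hi
  refine mul_le_mul (hc ▸ norm_coeff_prod_X_sub_C_le _ hw k) ?_ (norm_nonneg _) (by positivity)
  rw [norm_prod, ← hc, ← inv_pow]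
  rw [← Finset.prod_const]
  refine Finset.prod_le_prod (fun _ _ => norm_nonneg _) fun m hm => ?_
  rw [norm_inv]
  exact inv_anti₀ hδ (hsep _ _ (Finset.ne_of_mem_erase hm).symm)

lemma sum_lagrange_basis_coeff_mul_pow [Fintype ι] [DecidableEq ι] {w : ι → ℂ}
    (hw : Function.Injective w) (k : ℕ) {m : ℕ} (hm : m < Fintype.card ι) :
    ∑ i, (Lagrange.basis univ w i).coeff k * w i ^ m = if k = m then 1 else 0 := by
  have h : (X ^ m : ℂ[X]) = Lagrange.interpolate univ w fun i => w i ^ m :=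
    Lagrange.eq_interpolate_of_eval_eq _ hw.injOn (by simpa [degree_X_pow] using hm) (by simp)
  rw [← coeff_X_pow, h, Lagrange.interpolate_apply, finsetSum_coeff]
  exact Finset.sum_congr rfl fun i _ => by rw [coeff_C_mul, mul_comm]

/-- `n` points on the unit circle that are `δ`-separated satisfy `δ ^ (n choose 2) ≤ n!`. -/
lemma separation_pow_le_factorial {n : ℕ} {w : Fin n → ℂ} (hw : ∀ i, ‖w i‖ = 1) {δ : ℝ}
    (hδ : 0 ≤ δ) (hsep : ∀ i j, i ≠ j → δ ≤ ‖w i - w j‖) :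
    δ ^ (n * (n - 1) / 2) ≤ n.factorial := by
  have hdet : ‖(Matrix.vandermonde w).det‖ ≤ n.factorial := by
    have := Matrix.det_le (A := Matrix.vandermonde w)
      (abv := IsAbsoluteValue.toAbsoluteValue (norm : ℂ → ℝ)) (x := 1)
      fun i j => by simp [Matrix.vandermonde_apply, hw]
    simpa using this
  refine le_trans ?_ hdet
  rw [Matrix.det_vandermonde, norm_prod]
  have hcard : n * (n - 1) / 2 = ∑ i : Fin n, (Ioi i).card := by
    simp only [Fin.card_Ioi]
    rw [Fin.sum_univ_eq_sum_range (fun i => n - 1 - i), Finset.sum_range_reflect (fun i => i),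
      Finset.sum_range_id]
  rw [hcard, ← Finset.prod_pow_eq_pow_sum]
  refine Finset.prod_le_prod (fun i _ => by positivity) fun i _ => ?_
  rw [norm_prod, ← Finset.prod_const]
  exact Finset.prod_le_prod (fun _ _ => hδ) fun j hj => hsep _ _ (Finset.mem_Ioi.1 hj).ne'

/-- The minimal distance between finitely many (at least two) distinct points is positive. -/
lemma sInf_separation_pos {j : ℕ} (hj : 0 < j) {w : Fin (j + 1) → ℂ} (hw : Function.Injective w) :
    0 < sInf {x : ℝ | ∃ α β : Fin (j + 1), α ≠ β ∧ x = ‖w α - w β‖} ∧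
      ∀ α β, α ≠ β →
        sInf {x : ℝ | ∃ α β : Fin (j + 1), α ≠ β ∧ x = ‖w α - w β‖} ≤ ‖w α - w β‖ := by
  set S : Set ℝ := {x : ℝ | ∃ α β : Fin (j + 1), α ≠ β ∧ x = ‖w α - w β‖}
  have hfin : S.Finite := by
    refine (Set.finite_range fun p : Fin (j + 1) × Fin (j + 1) => ‖w p.1 - w p.2‖).subset ?_
    rintro _ ⟨α, β, -, rfl⟩
    exact ⟨(α, β), rfl⟩
  have hne : S.Nonempty := ⟨_, 0, Fin.last j, fun h => hj.ne (congrArg Fin.val h), rfl⟩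
  refine ⟨?_, fun α β h => csInf_le hfin.bddBelow ⟨α, β, h, rfl⟩⟩
  obtain ⟨α, β, h, hx⟩ := hne.csInf_mem hfin
  rw [hx, norm_pos_iff, sub_ne_zero]
  exact hw.ne h

end Vandermonde

/-- Proposition 4.6(b): given unit vectors `ν₀,…,ν_j` with pairwise distinct squares,
there are constants `a(n,k)` with
`|a(n,k)| ≤ (j!)² (min_{α≠β} |ν_α² − ν_β²|)^{−j(j+1)/2}` such that
`∂^j f/(∂z^k ∂z̄^{j−k})(z) = Σ_{n=0}^j a(n,k) ∇_{ν_n}^j f(z)` whenever `f` is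
`j`-times continuously differentiable near `z`. -/
theorem statement6 (j : ℕ) (ν : Fin (j + 1) → ℂ) (hν : ∀ n, ‖ν n‖ = 1)
    (hdist : ∀ n n' : Fin (j + 1), n ≠ n' → ν n ^ 2 ≠ ν n' ^ 2) :
    ∃ a : Fin (j + 1) → Fin (j + 1) → ℂ,
      (∀ n k : Fin (j + 1), ‖a n k‖ ≤ (Nat.factorial j : ℝ) ^ 2 *
          (sInf {x : ℝ | ∃ α β : Fin (j + 1), α ≠ β ∧ x = ‖ν α ^ 2 - ν β ^ 2‖}) ^
            (-(((j * (j + 1)) / 2 : ℕ) : ℤ))) ∧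
      ∀ (z : ℂ) (f : ℂ → ℂ), ContDiffAt ℝ j f z →
        ∀ k : Fin (j + 1),
          wMixed (k : ℕ) (j - (k : ℕ)) f z =
            ∑ n : Fin (j + 1), a n k * dirDIter (ν n) j f z := by
  set δ : ℝ := sInf {x : ℝ | ∃ α β : Fin (j + 1), α ≠ β ∧ x = ‖ν α ^ 2 - ν β ^ 2‖}
  set w : Fin (j + 1) → ℂ := fun n => ν n ^ 2 with hw_def
  have hw : ∀ n, ‖w n‖ = 1 := fun n => by simp [hw_def, hν]
  have hinj : Function.Injective w := fun n m h => by
    by_contra hne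
    exact hdist n m hne h
  refine ⟨fun n k => ((j.choose k : ℂ))⁻¹ * ν n ^ j * (Lagrange.basis univ w n).coeff k, ?_, ?_⟩
  · intro n k
    rcases Nat.eq_zero_or_pos j with rfl | hj
    · obtain rfl : n = 0 := Fin.fin_one_eq_zero n
      obtain rfl : k = 0 := Fin.fin_one_eq_zero k
      simp [Lagrange.basis]
    obtain ⟨hδ, hsep⟩ : 0 < δ ∧ ∀ α β, α ≠ β → δ ≤ ‖w α - w β‖ :=
      sInf_separation_pos hj hinj
    have hchoose : (0 : ℝ) < j.choose k := by
      exact_mod_cast Nat.choose_pos (Nat.lt_succ_iff.1 k.2)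
    have hbasis : ‖(Lagrange.basis univ w n).coeff k‖ ≤ j.choose k * (δ ^ j)⁻¹ := by
      simpa using norm_coeff_lagrange_basis_le univ hw hδ hsep (mem_univ n) k
    have hsmall : δ ^ (j * (j - 1) / 2) ≤ j.factorial :=
      separation_pow_le_factorial (w := fun i : Fin j => w i.castSucc) (fun i => hw _) hδ.le
        fun α β h => hsep _ _ fun h' => h (Fin.castSucc_injective _ h')
    have hexp : j * (j + 1) / 2 = j + j * (j - 1) / 2 := by
      rw [add_comm j (_ / 2), ← Nat.add_mul_div_left _ _ two_pos]
      congr 1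
      obtain ⟨i, rfl⟩ : ∃ i, j = i + 1 := ⟨j - 1, by omega⟩
      simp only [Nat.add_sub_cancel]
      ring
    have hfact : (1 : ℝ) ≤ j.factorial := by exact_mod_cast Nat.factorial_pos j
    calc ‖((j.choose k : ℂ))⁻¹ * ν n ^ j * (Lagrange.basis univ w n).coeff k‖
        = (j.choose k : ℝ)⁻¹ * ‖(Lagrange.basis univ w n).coeff k‖ := by simp [hν]
      _ ≤ (j.choose k : ℝ)⁻¹ * (j.choose k * (δ ^ j)⁻¹) := by gcongr
      _ = (δ ^ j)⁻¹ := by field_simp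
      _ = δ ^ (j * (j - 1) / 2) * (δ ^ (j * (j + 1) / 2))⁻¹ := by
          rw [hexp, pow_add]
          field_simp
      _ ≤ (j.factorial : ℝ) ^ 2 * (δ ^ (j * (j + 1) / 2))⁻¹ := by
          gcongr
          exact hsmall.trans (le_self_pow₀ hfact two_ne_zero)
      _ = _ := by rw [zpow_neg, zpow_natCast]
  · intro z f hf k
    have hk : (k : ℕ) ≤ j := Nat.lt_succ_iff.1 k.2
    have hchoose : (j.choose k : ℂ) ≠ 0 := by
      exact_mod_cast (Nat.choose_pos hk).ne'
    have hexpand (n : Fin (j + 1)) : ν n ^ j * dirDIter (ν n) j f z =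
        ∑ p ∈ antidiagonal j, (j.choose p.1 : ℂ) * (w n ^ p.1 * wMixed p.1 p.2 f z) := by
      rw [dirDIter_eq_sum_wMixed hf, Finset.mul_sum]
      refine Finset.sum_congr rfl fun p hp => ?_
      have hunit : ν n * (starRingEnd ℂ) (ν n) = 1 := by simp [Complex.mul_conj', hν]
      calc ν n ^ j * ((j.choose p.1 : ℂ) *
            (ν n ^ p.1 * (starRingEnd ℂ) (ν n) ^ p.2 * wMixed p.1 p.2 f z))
          = (j.choose p.1 : ℂ) * ((ν n ^ 2) ^ p.1 * wMixed p.1 p.2 f z) *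
            (ν n * (starRingEnd ℂ) (ν n)) ^ p.2 := by
            rw [← mem_antidiagonal.1 hp]
            ring
        _ = _ := by rw [hunit, one_pow, mul_one]
    symm
    calc ∑ n, ((j.choose k : ℂ))⁻¹ * ν n ^ j * (Lagrange.basis univ w n).coeff k *
          dirDIter (ν n) j f z
        = ((j.choose k : ℂ))⁻¹ * ∑ n, (Lagrange.basis univ w n).coeff k *
            (ν n ^ j * dirDIter (ν n) j f z) := by
          rw [Finset.mul_sum]
          exact Finset.sum_congr rfl fun n _ => by ring
      _ = ((j.choose k : ℂ))⁻¹ * ∑ p ∈ antidiagonal j, (j.choose p.1 : ℂ) *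
            wMixed p.1 p.2 f z * ∑ n, (Lagrange.basis univ w n).coeff k * w n ^ p.1 := by
          simp only [hexpand, Finset.mul_sum]
          rw [Finset.sum_comm]
          exact Finset.sum_congr rfl fun p _ => Finset.sum_congr rfl fun n _ => by ring
      _ = ((j.choose k : ℂ))⁻¹ * ∑ p ∈ antidiagonal j, (j.choose p.1 : ℂ) *
            wMixed p.1 p.2 f z * if (k : ℕ) = p.1 then 1 else 0 := by
          congr 1
          refine Finset.sum_congr rfl fun p hp => ?_
          have hp' := mem_antidiagonal.1 hp
          rw [sum_lagrange_basis_coeff_mul_pow hinj k (by simp; omega)]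
      _ = wMixed k (j - k) f z := by
          rw [Finset.sum_eq_single ((k : ℕ), j - k)]
          · simp [hchoose]
          · intro p hp hne
            have hp' := mem_antidiagonal.1 hp
            rw [if_neg, mul_zero]
            rintro h
            exact hne (Prod.ext h.symm (by simp only; omega))
          · intro h
            exact absurd (Finset.HasAntidiagonal.mem_antidiagonal.2 (by simp only; omega)) h
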